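/- Let β > 0, let q ≥ 0 be such that q is not of the form k + 1/2 for a nonnegative integer k, and let 0 < c < 1. Define f_1(s) = (πs/sin(πs)) · M(q+1; q+5/2; 2s/β) and F_q^{(1)}(η,β) = (1/(2π)) ∫_{-∞}^∞ e^{η(c+it)} f_1(c+it)/(c+it) dt. Then for every η > 0 the series Σ_{n=0}^∞ (−1)^n e^{−nη} M(q+1; q+5/2; −2n/β) converges and F_q^{(1)}(η,β) = Σ_{n=0}^∞ (−1)^n e^{−nη} M(q+1; q+5/2; −2n/β). -/

import Mathlib

open Real MeasureTheory Set

/-- Kummer's confluent hypergeometric function `M(a;b;z)` as a power series. -/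
noncomputable def kummerM (a b z : ℂ) : ℂ :=
  ∑' k : ℕ, (ascPochhammer ℂ k).eval a /
      ((ascPochhammer ℂ k).eval b * (k.factorial : ℂ)) * z ^ k

/-- The function `f_1(s)`. -/
noncomputable def f1 (q β : ℝ) (s : ℂ) : ℂ :=
  (π : ℂ) * s / Complex.sin ((π : ℂ) * s) *
    kummerM ((q : ℂ) + 1) ((q : ℂ) + 5 / 2) (2 * s / (β : ℂ))

/-- The function `F_q^{(1)}(η,β)`. -/
noncomputable def F1 (q β c η : ℝ) : ℂ :=
  (1 / (2 * (π : ℂ))) * ∫ t : ℝ,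
    Complex.exp ((η : ℂ) * ((c : ℂ) + t * Complex.I)) *
      f1 q β ((c : ℂ) + t * Complex.I) / ((c : ℂ) + t * Complex.I)

/-!
For `0 < Re s < 1` the cosecant `π / sin (π s) = B(s, 1 - s)` is the Mellin transform of
`y ↦ 1 / (1 + y)`, so Mellin inversion gives
`1 / (1 + exp (-x)) = (2πi)⁻¹ ∫ exp (x s) π / sin (π s) ds` along `Re s = c`. When `x > 0` the left
side is also `∑ (-1) ^ n exp (-n x)`. Averaging the equality of these two expansions over
`x = g u` against an integrable weight `W` yields
`∑ (-1) ^ n Φ (-n) = (2πi)⁻¹ ∫ Φ s π / sin (π s) ds` for `Φ s = ∫ exp (s g u) W u du`.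
Euler's integral presents `exp (η s) M(a; b; w s)`, up to the factor `B(a, b - a)`, as such a `Φ`
with `g u = η + w u` and a Beta weight on `(0, 1)`.
-/

section Cosecant

lemma one_add_sq_div_two_le_cosh (x : ℝ) : 1 + x ^ 2 / 2 ≤ cosh x := by
  have half_angle : cosh x = 1 + 2 * sinh (x / 2) ^ 2 := by
    have h := cosh_two_mul (x / 2)
    rw [mul_div_cancel₀ x two_ne_zero, cosh_sq (x / 2)] at h
    linarith
  have sq_le_sinh_sq : (x / 2) ^ 2 ≤ sinh (x / 2) ^ 2 := by
    rw [sq_le_sq, abs_sinh]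
    exact self_le_sinh_iff.2 (abs_nonneg _)
  linarith

lemma one_add_sq_le_cosh_pi_mul (t : ℝ) : 1 + t ^ 2 ≤ cosh (π * t) := by
  have h2 : 2 ≤ π ^ 2 := by nlinarith [pi_gt_three]
  nlinarith [one_add_sq_div_two_le_cosh (π * t), sq_nonneg t]

lemma sin_pi_mul_pos {x : ℝ} (h0 : 0 < x) (h1 : x < 1) : 0 < sin (π * x) :=
  sin_pos_of_pos_of_lt_pi (by positivity) (mul_lt_of_lt_one_right pi_pos h1)

lemma re_sin_eq_sin_mul_cosh (z : ℂ) : (Complex.sin z).re = sin z.re * cosh z.im := by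
  rw [Complex.sin_eq]
  norm_cast
  rw [Complex.add_re, Complex.ofReal_re, Complex.re_ofReal_mul, Complex.I_re, mul_zero, add_zero]

lemma sin_pi_mul_re_mul_le_norm_sin {s : ℂ} (h0 : 0 < s.re) (h1 : s.re < 1) :
    sin (π * s.re) * (1 + s.im ^ 2) ≤ ‖Complex.sin (π * s)‖ :=
  calc sin (π * s.re) * (1 + s.im ^ 2)
      ≤ sin (π * s.re) * cosh (π * s.im) :=
        mul_le_mul_of_nonneg_left (one_add_sq_le_cosh_pi_mul _) (sin_pi_mul_pos h0 h1).le
    _ = (Complex.sin (π * s)).re := by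
        rw [re_sin_eq_sin_mul_cosh, Complex.re_ofReal_mul, Complex.im_ofReal_mul]
    _ ≤ ‖Complex.sin (π * s)‖ := Complex.re_le_norm _

lemma verticalIntegrable_pi_div_sin {c : ℝ} (hc0 : 0 < c) (hc1 : c < 1) :
    Complex.VerticalIntegrable (fun s ↦ π / Complex.sin (π * s)) c := by
  have hsin := sin_pi_mul_pos hc0 hc1
  have lower (t : ℝ) :
      sin (π * c) * (1 + t ^ 2) ≤ ‖Complex.sin (π * (c + t * Complex.I))‖ := by
    have h := sin_pi_mul_re_mul_le_norm_sin (s := c + t * Complex.I) (by simpa) (by simpa)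
    simpa only [Complex.add_re, Complex.ofReal_re, Complex.add_im, Complex.ofReal_im,
      Complex.re_mul_ofReal, Complex.re_ofReal_mul, Complex.im_ofReal_mul, Complex.I_re,
      Complex.I_im, mul_zero, mul_one, add_zero, zero_add] using h
  have sin_ne_zero (t : ℝ) : Complex.sin (π * (c + t * Complex.I)) ≠ 0 :=
    norm_pos_iff.1 <| lt_of_lt_of_le (by positivity) (lower t)
  refine (integrable_inv_one_add_sq.const_mul (π / sin (π * c))).mono' ?_ (.of_forall fun t ↦ ?_)
  · exact (continuous_const.div (by fun_prop) sin_ne_zero).aestronglyMeasurable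
  · rw [norm_div, Complex.norm_real, norm_of_nonneg pi_pos.le, ← div_eq_mul_inv, div_div]
    gcongr
    exact lower t

end Cosecant

section MellinBeta

lemma image_div_one_sub_Ioo : (fun u : ℝ ↦ u / (1 - u)) '' Ioo 0 1 = Ioi 0 := by
  ext y
  simp only [mem_image, mem_Ioo, mem_Ioi]
  constructor
  · rintro ⟨u, ⟨h0, h1⟩, rfl⟩
    exact div_pos h0 (sub_pos.2 h1)
  · intro hy
    refine ⟨y / (1 + y), ⟨by positivity, (div_lt_one (by positivity)).2 (by linarith)⟩, ?_⟩
    have : 1 + y ≠ 0 := by positivity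
    field_simp
    ring

lemma hasDerivWithinAt_div_one_sub {u : ℝ} (hu : u ∈ Ioo (0 : ℝ) 1) :
    HasDerivWithinAt (fun u : ℝ ↦ u / (1 - u)) (1 / (1 - u) ^ 2) (Ioo 0 1) u := by
  have h := (hasDerivAt_id u).div ((hasDerivAt_id u).const_sub 1) (sub_pos.2 hu.2).ne'
  refine (h.congr_deriv ?_).hasDerivWithinAt
  simp

lemma injOn_div_one_sub : InjOn (fun u : ℝ ↦ u / (1 - u)) (Ioo 0 1) := by
  intro u hu v hv h
  have h' := (div_eq_div_iff (sub_pos.2 hu.2).ne' (sub_pos.2 hv.2).ne').1 h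
  linarith

/-- The density `u ^ (a - 1) (1 - u) ^ (b - 1)` on `(0, 1)` whose total mass is Euler's Beta
function `B(a, b)`; it is the weight in Euler's integral for Kummer's function. -/
noncomputable def betaKernel (a b : ℂ) (u : ℝ) : ℂ :=
  (u : ℂ) ^ (a - 1) * (1 - (u : ℂ)) ^ (b - 1)

lemma integral_betaKernel (a b : ℂ) :
    ∫ u in Ioo (0 : ℝ) 1, betaKernel a b u = Complex.betaIntegral a b := by
  rw [Complex.betaIntegral, intervalIntegral.integral_of_le zero_le_one,
    integral_Ioc_eq_integral_Ioo]
  rfl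

lemma integrableOn_continuous_mul_betaKernel {a b : ℂ} (ha : 0 < a.re) (hb : 0 < b.re)
    {f : ℝ → ℂ} (hf : Continuous f) :
    IntegrableOn (fun u ↦ f u * betaKernel a b u) (Ioo 0 1) :=
  (intervalIntegrable_iff_integrableOn_Ioo_of_le zero_le_one).1 <|
    (Complex.betaIntegral_convergent ha hb).continuousOn_mul hf.continuousOn

lemma integrableOn_betaKernel {a b : ℂ} (ha : 0 < a.re) (hb : 0 < b.re) :
    IntegrableOn (betaKernel a b) (Ioo 0 1) :=
  (intervalIntegrable_iff_integrableOn_Ioo_of_le zero_le_one).1 <|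
    Complex.betaIntegral_convergent ha hb

lemma abs_deriv_smul_mellin_integrand_eq_betaKernel (a s : ℂ) {u : ℝ} (hu : u ∈ Ioo (0 : ℝ) 1) :
    |1 / (1 - u) ^ 2| • (((u / (1 - u) : ℝ) : ℂ) ^ (s - 1) •
      (1 + ((u / (1 - u) : ℝ) : ℂ)) ^ (-a)) = betaKernel s (a - s) u := by
  have h1 : 0 < 1 - u := sub_pos.2 hu.2
  have h1c : ((1 - u : ℝ) : ℂ) ≠ 0 := Complex.ofReal_ne_zero.2 h1.ne'
  have one_add_eq : 1 + ((u / (1 - u) : ℝ) : ℂ) = (((1 - u)⁻¹ : ℝ) : ℂ) := by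
    norm_cast
    field_simp
    ring
  have inv_cpow (x : ℂ) : (((1 - u)⁻¹ : ℝ) : ℂ) ^ x = ((1 - u : ℝ) : ℂ) ^ (-x) := by
    rw [Complex.ofReal_inv, Complex.inv_cpow _ _ (by
      rw [Complex.arg_ofReal_of_nonneg h1.le]; exact pi_pos.ne), Complex.cpow_neg]
  have jacobian : ((|1 / (1 - u) ^ 2| : ℝ) : ℂ) = ((1 - u : ℝ) : ℂ) ^ (-2 : ℂ) := by
    rw [abs_of_pos (by positivity), Complex.cpow_neg, Complex.cpow_ofNat]
    push_cast
    rw [one_div]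
  rw [Complex.real_smul, smul_eq_mul, one_add_eq, inv_cpow, jacobian, div_eq_mul_inv,
    Complex.ofReal_mul, Complex.mul_cpow_ofReal_nonneg hu.1.le (inv_pos.2 h1).le, inv_cpow,
    betaKernel, ← Complex.ofReal_one, ← Complex.ofReal_sub, Complex.ofReal_one,
    show a - s - 1 = -2 + -(s - 1) + - -a by ring, Complex.cpow_add _ _ h1c,
    Complex.cpow_add _ _ h1c]
  ring

lemma mellin_one_add_cpow_neg (a s : ℂ) :
    mellin (fun y : ℝ ↦ (1 + (y : ℂ)) ^ (-a)) s = Complex.betaIntegral s (a - s) := by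
  rw [mellin, ← image_div_one_sub_Ioo, integral_image_eq_integral_abs_deriv_smul measurableSet_Ioo
    (fun _ ↦ hasDerivWithinAt_div_one_sub) injOn_div_one_sub, ← integral_betaKernel]
  exact setIntegral_congr_fun measurableSet_Ioo
    fun _ ↦ abs_deriv_smul_mellin_integrand_eq_betaKernel a s

lemma mellinConvergent_one_add_cpow_neg {a s : ℂ} (hs : 0 < s.re) (hsa : s.re < a.re) :
    MellinConvergent (fun y : ℝ ↦ (1 + (y : ℂ)) ^ (-a)) s := by
  rw [MellinConvergent, ← image_div_one_sub_Ioo,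
    integrableOn_image_iff_integrableOn_abs_deriv_smul measurableSet_Ioo
      (fun _ ↦ hasDerivWithinAt_div_one_sub) injOn_div_one_sub,
    integrableOn_congr_fun (fun _ ↦ abs_deriv_smul_mellin_integrand_eq_betaKernel a s)
      measurableSet_Ioo]
  exact integrableOn_betaKernel hs (by rwa [Complex.sub_re, sub_pos])

lemma mellin_inv_one_add {s : ℂ} (h0 : 0 < s.re) (h1 : s.re < 1) :
    mellin (fun y : ℝ ↦ (1 + (y : ℂ))⁻¹) s = π / Complex.sin (π * s) := by
  simp_rw [← Complex.cpow_neg_one]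
  rw [mellin_one_add_cpow_neg, ← Complex.Gamma_mul_Gamma_one_sub,
    Complex.Gamma_mul_Gamma_eq_betaIntegral h0 (by simpa using h1), add_sub_cancel,
    Complex.Gamma_one, one_mul]

lemma integral_exp_mul_pi_div_sin {c : ℝ} (hc0 : 0 < c) (hc1 : c < 1) (x : ℝ) :
    ∫ t : ℝ, Complex.exp ((c + t * Complex.I) * x) * (π / Complex.sin (π * (c + t * Complex.I))) =
      2 * π * (1 + Complex.exp (-x))⁻¹ := by
  have mellin_eq (t : ℝ) : mellin (fun y : ℝ ↦ (1 + (y : ℂ))⁻¹) (c + t * Complex.I) =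
      π / Complex.sin (π * (c + t * Complex.I)) :=
    mellin_inv_one_add (by simpa using hc0) (by simpa using hc1)
  have convergent : MellinConvergent (fun y : ℝ ↦ (1 + (y : ℂ))⁻¹) c := by
    simp_rw [← Complex.cpow_neg_one]
    exact mellinConvergent_one_add_cpow_neg (by simpa using hc0) (by simpa using hc1)
  have vertical : Complex.VerticalIntegrable (mellin fun y : ℝ ↦ (1 + (y : ℂ))⁻¹) c := by
    simpa only [Complex.VerticalIntegrable, mellin_eq] using verticalIntegrable_pi_div_sin hc0 hc1
  have continuousAt : ContinuousAt (fun y : ℝ ↦ (1 + (y : ℂ))⁻¹) (exp (-x)) :=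
    ContinuousAt.inv₀ (by fun_prop) (by norm_cast; positivity)
  have exp_cpow (s : ℂ) : ((exp (-x) : ℝ) : ℂ) ^ (-s) = Complex.exp (s * x) := by
    rw [Complex.cpow_def_of_ne_zero (Complex.ofReal_ne_zero.2 (exp_pos _).ne'),
      ← Complex.ofReal_log (exp_pos _).le, log_exp]
    push_cast
    ring_nf
  have inversion := mellinInv_mellin_eq c _ (exp_pos (-x)) convergent vertical continuousAt
  simp only [mellinInv, mellin_eq, exp_cpow, smul_eq_mul, Complex.real_smul] at inversion
  push_cast at inversion
  rw [← inversion, ← mul_assoc, mul_one_div_cancel (by norm_cast; positivity), one_mul]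

end MellinBeta

section LaplaceIntegral

variable {α : Type*} [MeasurableSpace α] {μ : Measure α} {g : α → ℝ} {W : α → ℂ}

lemma hasSum_integral_mul_of_norm_le (hW : Integrable W μ) {f : ℕ → α → ℂ} {F : α → ℂ}
    {b : ℕ → ℝ} (hf : ∀ n, AEStronglyMeasurable (f n) μ) (hfb : ∀ n, ∀ᵐ u ∂μ, ‖f n u‖ ≤ b n)
    (hb : Summable b) (hF : ∀ᵐ u ∂μ, HasSum (fun n ↦ f n u) (F u)) :
    HasSum (fun n ↦ ∫ u, f n u * W u ∂μ) (∫ u, F u * W u ∂μ) := by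
  refine hasSum_integral_of_dominated_convergence (fun n u ↦ b n * ‖W u‖)
    (fun n ↦ (hf n).mul hW.aestronglyMeasurable) (fun n ↦ ?_)
    (.of_forall fun u ↦ hb.mul_right _) ?_ ?_
  · filter_upwards [hfb n] with u hu
    rw [norm_mul]
    gcongr
  · simp_rw [tsum_mul_right]
    exact hW.norm.const_mul _
  · filter_upwards [hF] with u hu using hu.mul_right _

/-- The transform `Φ s = ∫ exp (s g u) W u dμ u` of a complex weight `W`, the exponent being an
arbitrary real function `g`; for `g u = -u` it is the Laplace transform of `W`. -/
noncomputable def laplaceIntegral (μ : Measure α) (g : α → ℝ) (W : α → ℂ) (s : ℂ) : ℂ :=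
  ∫ u, Complex.exp (s * g u) * W u ∂μ

lemma hasSum_laplaceIntegral_neg_nat {δ : ℝ} (hδ : 0 < δ) (hg : AEMeasurable g μ)
    (hδg : ∀ᵐ u ∂μ, δ ≤ g u) (hW : Integrable W μ) :
    HasSum (fun n : ℕ ↦ (-1) ^ n * laplaceIntegral μ g W (-n))
      (∫ u, (1 + Complex.exp (-g u))⁻¹ * W u ∂μ) := by
  have norm_le : ∀ᵐ u ∂μ, ‖-Complex.exp (-g u)‖ ≤ exp (-δ) := by
    filter_upwards [hδg] with u hu
    rw [norm_neg, ← Complex.ofReal_neg, Complex.norm_exp_ofReal]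
    gcongr
  have ratio_lt_one : exp (-δ) < 1 := exp_lt_one_iff.2 (neg_lt_zero.2 hδ)
  convert! hasSum_integral_mul_of_norm_le hW (f := fun n u ↦ (-Complex.exp (-g u)) ^ n)
    (F := fun u ↦ (1 + Complex.exp (-g u))⁻¹) (fun n ↦ ?_) (fun n ↦ ?_)
    (summable_geometric_of_lt_one (exp_pos (-δ)).le ratio_lt_one) ?_ using 1
  · ext n
    rw [laplaceIntegral, ← integral_const_mul]
    congr! 2
    rw [neg_pow (Complex.exp _), ← Complex.exp_nat_mul, mul_neg, neg_mul, mul_assoc]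
  · exact AEMeasurable.aestronglyMeasurable (by fun_prop)
  · filter_upwards [norm_le] with u hu
    rw [norm_pow]
    gcongr
  · filter_upwards [norm_le] with u hu
    simpa only [sub_neg_eq_add] using hasSum_geometric_of_norm_lt_one (hu.trans_lt ratio_lt_one)

lemma integrable_prod_pi_div_sin_mul_exp [SFinite μ] {c : ℝ} (hc0 : 0 < c) (hc1 : c < 1)
    (hg : AEMeasurable g μ) (hgW : Integrable (fun u ↦ Complex.exp (c * g u) * W u) μ) :
    Integrable (fun p : ℝ × α ↦ π / Complex.sin (π * (c + p.1 * Complex.I)) *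
      (Complex.exp ((c + p.1 * Complex.I) * g p.2) * W p.2)) (volume.prod μ) := by
  have on_real_axis := (verticalIntegrable_pi_div_sin hc0 hc1).mul_prod hgW
  have phase_measurable : AEStronglyMeasurable
      (fun p : ℝ × α ↦ Complex.exp ((p.1 * g p.2 : ℝ) * Complex.I)) (volume.prod μ) := by
    have := hg.comp_snd (μ := (volume : Measure ℝ))
    exact AEMeasurable.aestronglyMeasurable (by fun_prop)
  refine (on_real_axis.bdd_mul phase_measurable (c := 1)
    (.of_forall fun p ↦ (Complex.norm_exp_ofReal_mul_I _).le)).congr (.of_forall fun p ↦ ?_)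
  have split : Complex.exp ((c + p.1 * Complex.I) * g p.2) =
      Complex.exp ((p.1 * g p.2 : ℝ) * Complex.I) * Complex.exp (c * g p.2) := by
    rw [← Complex.exp_add]
    push_cast
    ring_nf
  simp only [split]
  ring

lemma integral_pi_div_sin_mul_laplaceIntegral [SFinite μ] {c : ℝ} (hc0 : 0 < c) (hc1 : c < 1)
    (hg : AEMeasurable g μ) (hgW : Integrable (fun u ↦ Complex.exp (c * g u) * W u) μ) :
    ∫ t : ℝ, π / Complex.sin (π * (c + t * Complex.I)) *
        laplaceIntegral μ g W (c + t * Complex.I) =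
      2 * π * ∫ u, (1 + Complex.exp (-g u))⁻¹ * W u ∂μ := by
  simp_rw [laplaceIntegral, ← integral_const_mul]
  rw [integral_integral_swap (integrable_prod_pi_div_sin_mul_exp hc0 hc1 hg hgW)]
  congr! 2
  rw [← mul_assoc, ← integral_exp_mul_pi_div_sin hc0 hc1, ← integral_mul_const]
  congr! 2
  ring

theorem hasSum_laplaceIntegral_neg_nat_eq_integral [SFinite μ] {c δ : ℝ} (hc0 : 0 < c)
    (hc1 : c < 1) (hδ : 0 < δ) (hg : AEMeasurable g μ) (hδg : ∀ᵐ u ∂μ, δ ≤ g u)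
    (hW : Integrable W μ) (hgW : Integrable (fun u ↦ Complex.exp (c * g u) * W u) μ) :
    HasSum (fun n : ℕ ↦ (-1) ^ n * laplaceIntegral μ g W (-n))
      (1 / (2 * π) * ∫ t : ℝ, π / Complex.sin (π * (c + t * Complex.I)) *
        laplaceIntegral μ g W (c + t * Complex.I)) := by
  rw [integral_pi_div_sin_mul_laplaceIntegral hc0 hc1 hg hgW, ← mul_assoc,
    one_div_mul_cancel (by norm_cast; positivity), one_mul]
  exact hasSum_laplaceIntegral_neg_nat hδ hg hδg hW

end LaplaceIntegral

section EulerIntegral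

lemma betaIntegral_ne_zero {a b : ℂ} (ha : 0 < a.re) (hb : 0 < b.re) :
    Complex.betaIntegral a b ≠ 0 :=
  right_ne_zero_of_mul <| Complex.Gamma_mul_Gamma_eq_betaIntegral ha hb ▸
    mul_ne_zero (Complex.Gamma_ne_zero_of_re_pos ha) (Complex.Gamma_ne_zero_of_re_pos hb)

lemma Gamma_add_nat_eq_ascPochhammer_mul {a : ℂ} (ha : 0 < a.re) (n : ℕ) :
    Complex.Gamma (a + n) = (ascPochhammer ℂ n).eval a * Complex.Gamma a := by
  have ne_neg_nat (k : ℕ) : a ≠ -k := by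
    rintro rfl
    rw [Complex.neg_re, Complex.natCast_re, neg_pos] at ha
    exact ha.not_ge k.cast_nonneg
  rw [← Complex.Gamma_add_nat_div_Gamma_eq a ne_neg_nat,
    div_mul_cancel₀ _ (Complex.Gamma_ne_zero_of_re_pos ha)]

lemma betaIntegral_add_nat_left {a b : ℂ} (ha : 0 < a.re) (hb : 0 < b.re) (n : ℕ) :
    Complex.betaIntegral (a + n) b = Complex.betaIntegral a b *
      ((ascPochhammer ℂ n).eval a / (ascPochhammer ℂ n).eval (a + b)) := by
  have hab : 0 < (a + b).re := add_pos ha hb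
  have han : 0 < (a + n).re := by
    rw [Complex.add_re, Complex.natCast_re]
    positivity
  rw [Complex.betaIntegral_eq_Gamma_mul_div _ _ han hb,
    Complex.betaIntegral_eq_Gamma_mul_div _ _ ha hb, add_right_comm,
    Gamma_add_nat_eq_ascPochhammer_mul ha, Gamma_add_nat_eq_ascPochhammer_mul hab]
  ring

lemma integral_pow_mul_betaKernel (a b : ℂ) (n : ℕ) :
    ∫ u in Ioo (0 : ℝ) 1, (u : ℂ) ^ n * betaKernel a b u = Complex.betaIntegral (a + n) b := by
  rw [← integral_betaKernel]
  refine setIntegral_congr_fun measurableSet_Ioo fun u hu ↦ ?_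
  have hu0 : (u : ℂ) ≠ 0 := Complex.ofReal_ne_zero.2 hu.1.ne'
  simp only [betaKernel]
  rw [add_sub_right_comm, Complex.cpow_add _ _ hu0, Complex.cpow_natCast]
  ring

variable {a b : ℂ}

lemma integral_exp_mul_betaKernel (ha : 0 < a.re) (hab : a.re < b.re) (z : ℂ) :
    ∫ u in Ioo (0 : ℝ) 1, Complex.exp (z * u) * betaKernel a (b - a) u =
      Complex.betaIntegral a (b - a) * kummerM a b z := by
  have hba : 0 < (b - a).re := by rwa [Complex.sub_re, sub_pos]
  have expansion := hasSum_integral_mul_of_norm_le (integrableOn_betaKernel ha hba)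
    (f := fun n (u : ℝ) ↦ (z * u) ^ n / (n.factorial : ℂ)) (F := fun u ↦ Complex.exp (z * u))
    (b := fun n ↦ ‖z‖ ^ n / n.factorial) (fun n ↦ by fun_prop)
    (fun n ↦ by
      filter_upwards [ae_restrict_mem measurableSet_Ioo] with u hu
      rw [norm_div, norm_pow, norm_mul, Complex.norm_natCast, Complex.norm_real,
        norm_of_nonneg hu.1.le]
      have := hu.1.le
      gcongr
      exact mul_le_of_le_one_right (norm_nonneg z) hu.2.le)
    (summable_pow_div_factorial _)
    (.of_forall fun u ↦ by
      simpa only [Complex.exp_eq_exp_ℂ] using NormedSpace.expSeries_div_hasSum_exp (z * u))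
  rw [← expansion.tsum_eq, kummerM, ← tsum_mul_left]
  congr! 2 with n
  calc ∫ u in Ioo (0 : ℝ) 1, (z * u) ^ n / (n.factorial : ℂ) * betaKernel a (b - a) u
      = z ^ n / n.factorial * ∫ u in Ioo (0 : ℝ) 1, (u : ℂ) ^ n * betaKernel a (b - a) u := by
        rw [← integral_const_mul]
        congr! 2
        ring
    _ = _ := by
        rw [integral_pow_mul_betaKernel, betaIntegral_add_nat_left ha hba, add_sub_cancel]
        ring

lemma laplaceIntegral_affine_betaKernel (ha : 0 < a.re) (hab : a.re < b.re) (η w : ℝ) (s : ℂ) :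
    laplaceIntegral (volume.restrict (Ioo 0 1)) (fun u ↦ η + w * u) (betaKernel a (b - a)) s =
      Complex.betaIntegral a (b - a) * (Complex.exp (η * s) * kummerM a b (w * s)) := by
  rw [mul_left_comm, ← integral_exp_mul_betaKernel ha hab, ← integral_const_mul, laplaceIntegral]
  congr! 2
  rw [← mul_assoc, ← Complex.exp_add]
  push_cast
  ring_nf

end EulerIntegral

theorem stmt6_general {a b : ℂ} (ha : 0 < a.re) (hab : a.re < b.re) {c η w : ℝ} (hc0 : 0 < c)
    (hc1 : c < 1) (hη : 0 < η) (hηw : 0 < η + w) :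
    HasSum (fun n : ℕ ↦ (-1 : ℂ) ^ n * Complex.exp (-n * η) * kummerM a b (w * -n))
      (1 / (2 * π) * ∫ t : ℝ, Complex.exp (η * (c + t * Complex.I)) *
        (π * (c + t * Complex.I) / Complex.sin (π * (c + t * Complex.I)) *
          kummerM a b (w * (c + t * Complex.I))) / (c + t * Complex.I)) := by
  have hba : 0 < (b - a).re := by rwa [Complex.sub_re, sub_pos]
  have min_le : ∀ᵐ u ∂volume.restrict (Ioo (0 : ℝ) 1), min η (η + w) ≤ η + w * u := by
    filter_upwards [ae_restrict_mem measurableSet_Ioo] with u hu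
    nlinarith [hu.1, hu.2, min_le_left η (η + w), min_le_right η (η + w)]
  have vertical_ne_zero (t : ℝ) : (c : ℂ) + t * Complex.I ≠ 0 := fun h ↦
    hc0.ne' (by simpa using congrArg Complex.re h)
  have h := hasSum_laplaceIntegral_neg_nat_eq_integral hc0 hc1 (lt_min hη hηw)
    (by fun_prop) min_le (integrableOn_betaKernel ha hba)
    (integrableOn_continuous_mul_betaKernel ha hba (by fun_prop))
  simp only [laplaceIntegral_affine_betaKernel ha hab] at h
  refine (hasSum_mul_left_iff (betaIntegral_ne_zero ha hba)).1 ?_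
  convert! h using 1
  · ext n
    rw [mul_comm (-n : ℂ)]
    ring
  · rw [mul_left_comm, ← integral_const_mul]
    refine congrArg _ (integral_congr_ae (.of_forall fun t ↦ ?_))
    have hs := vertical_ne_zero t
    beta_reduce
    generalize (c : ℂ) + t * Complex.I = s at hs ⊢
    field_simp

theorem stmt6 (q β c : ℝ) (hq : 0 ≤ q) (hhalf : ∀ k : ℕ, q ≠ (k : ℝ) + 1 / 2)
    (hβ : 0 < β) (hc0 : 0 < c) (hc1 : c < 1) :
    ∀ η : ℝ, 0 < η →
      Summable (fun n : ℕ => (-1 : ℂ) ^ n * ((Real.exp (-(n : ℝ) * η) : ℝ) : ℂ) *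
        kummerM ((q : ℂ) + 1) ((q : ℂ) + 5 / 2) (-2 * (n : ℂ) / (β : ℂ))) ∧
      F1 q β c η = ∑' n : ℕ, (-1 : ℂ) ^ n * ((Real.exp (-(n : ℝ) * η) : ℝ) : ℂ) *
        kummerM ((q : ℂ) + 1) ((q : ℂ) + 5 / 2) (-2 * (n : ℂ) / (β : ℂ)) := by
  intro η hη
  have h := stmt6_general (a := q + 1) (b := q + 5 / 2) (w := 2 / β) (by simp; linarith)
    (by norm_num) hc0 hc1 hη (by positivity)
  simpa [F1, f1, mul_div_right_comm, neg_div] using! And.intro h.summable h.tsum_eq.symm
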